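/- arXiv:1212.3828 — 2 statements merged into one kernel-verified Lean document; each statement's English description precedes it below -/
import Mathlib

section
/- For every real number τ > 0 there exist R > 0 and a function h : ℝ → ℝ that is infinitely differentiable, satisfies h(r) = e^r + τ for all r ≤ 0 and h(r) = e^r for all r ≥ R, and has deriv h r > 0 and second derivative (deriv (deriv h)) r > 0 for all r ∈ ℝ (in particular h is positive, strictly increasing, and strictly convex). -/
/-!
Let `S` be Mathlib's smooth transition (`0` on `(-∞, 0]`, `1` on `[1, ∞)`) and put
`h r = e^r + τ * (1 - S (r / R))`. Then `h' r = e^r - τ / R * S' (r / R)` and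
`h'' r = e^r - τ / R ^ 2 * S'' (r / R)`. The derivatives of `S` vanish for `r < 0`, where `h` is
`e^r + τ`; for `r ≥ 0` one has `e^r ≥ 1`, and `S'`, `S''` are bounded by a constant `C` because
they are continuous and vanish outside `[0, 1]`. Hence any `R ≥ 1` with `τ * C < R` works.
-/

/-- A continuous function that vanishes off `[0, 1]` is bounded above. -/
lemma exists_bound_of_vanish (f : ℝ → ℝ) (hf : Continuous f) (h0 : ∀ x < 0, f x = 0)
    (h1 : ∀ x > 1, f x = 0) : ∃ C : ℝ, 0 ≤ C ∧ ∀ x, f x ≤ C := by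
  obtain ⟨C, hC⟩ := (isCompact_Icc (a := (0 : ℝ)) (b := 1)).exists_bound_of_continuousOn
    hf.continuousOn
  have hC0 : 0 ≤ C := (norm_nonneg _).trans (hC 0 (by simp))
  refine ⟨C, hC0, fun x => ?_⟩
  rcases lt_or_ge x 0 with hx | hx
  · rw [h0 x hx]; exact hC0
  rcases lt_or_ge 1 x with hx' | hx'
  · rw [h1 x hx']; exact hC0
  · exact (le_abs_self _).trans (hC x ⟨hx, hx'⟩)

lemma deriv_eq_zero_of_eqOn_open {f : ℝ → ℝ} {s : Set ℝ} (hs : IsOpen s) (c : ℝ)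
    (h : ∀ x ∈ s, f x = c) : ∀ x ∈ s, deriv f x = 0 := by
  intro x hx
  have : f =ᶠ[nhds x] fun _ => c := Filter.eventually_of_mem (hs.mem_nhds hx) h
  rw [this.deriv_eq, deriv_const]

/-- The auxiliary warping function of Theorem 4.1: for each `τ > 0` there are `R > 0` and a
smooth function `h` with `h(r) = e^r + τ` for `r ≤ 0`, `h(r) = e^r` for `r ≥ R`, and
`h′ > 0`, `h″ > 0` everywhere. -/
theorem stmt_4 (τ : ℝ) (hτ : 0 < τ) :
    ∃ (R : ℝ) (h : ℝ → ℝ), 0 < R ∧ ContDiff ℝ (⊤ : ℕ∞) h ∧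
      (∀ r ≤ (0 : ℝ), h r = Real.exp r + τ) ∧
      (∀ r ≥ R, h r = Real.exp r) ∧
      (∀ r : ℝ, 0 < deriv h r) ∧
      (∀ r : ℝ, 0 < deriv (deriv h) r) := by
  set S := Real.smoothTransition with hS
  have hsm : ContDiff ℝ (⊤ : ℕ∞) S := Real.smoothTransition.contDiff
  have hsm1 : ContDiff ℝ (⊤ : ℕ∞) (deriv S) := (contDiff_infty_iff_deriv.1 hsm).2
  have hsm2 : ContDiff ℝ (⊤ : ℕ∞) (deriv (deriv S)) := (contDiff_infty_iff_deriv.1 hsm1).2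
  have hd0 : Differentiable ℝ S := (contDiff_infty_iff_deriv.1 hsm).1
  have hd1 : Differentiable ℝ (deriv S) := (contDiff_infty_iff_deriv.1 hsm1).1
  have n1 : ∀ x < 0, deriv S x = 0 := deriv_eq_zero_of_eqOn_open isOpen_Iio 0
    fun x hx => Real.smoothTransition.zero_of_nonpos (le_of_lt hx)
  have p1 : ∀ x > 1, deriv S x = 0 := deriv_eq_zero_of_eqOn_open isOpen_Ioi 1
    fun x hx => Real.smoothTransition.one_of_one_le (le_of_lt hx)
  have n2 : ∀ x < 0, deriv (deriv S) x = 0 := deriv_eq_zero_of_eqOn_open isOpen_Iio 0 n1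
  have p2 : ∀ x > 1, deriv (deriv S) x = 0 := deriv_eq_zero_of_eqOn_open isOpen_Ioi 0 p1
  obtain ⟨C₁, hC₁, b1⟩ := exists_bound_of_vanish _ hsm1.continuous n1 p1
  obtain ⟨C₂, hC₂, b2⟩ := exists_bound_of_vanish _ hsm2.continuous n2 p2
  set R : ℝ := 1 + τ * C₁ + τ * C₂ with hR
  have hτ1 : 0 ≤ τ * C₁ := by positivity
  have hτ2 : 0 ≤ τ * C₂ := by positivity
  have hR1 : 1 ≤ R := by linarith
  have hR0 : 0 < R := by linarith
  have hdiv : ∀ r : ℝ, HasDerivAt (fun r : ℝ => r / R) (1 / R) r :=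
    fun r => (hasDerivAt_id r).div_const R
  have D1 : deriv (fun r => Real.exp r + τ * (1 - S (r / R))) =
      fun r => Real.exp r - τ / R * deriv S (r / R) := by
    funext r
    have := (Real.hasDerivAt_exp r).add
      ((((hd0 (r / R)).hasDerivAt.comp r (hdiv r)).const_sub 1).const_mul τ)
    refine (HasDerivAt.deriv this).trans ?_
    ring_nf
  have D2 : deriv (fun r => Real.exp r - τ / R * deriv S (r / R)) =
      fun r => Real.exp r - τ / R ^ 2 * deriv (deriv S) (r / R) := by
    funext r
    have := (Real.hasDerivAt_exp r).sub
      (((hd1 (r / R)).hasDerivAt.comp r (hdiv r)).const_mul (τ / R))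
    refine (HasDerivAt.deriv this).trans ?_
    ring_nf
  refine ⟨R, fun r => Real.exp r + τ * (1 - S (r / R)), hR0, ?_, ?_, ?_, ?_, ?_⟩
  · exact Real.contDiff_exp.add (contDiff_const.mul (contDiff_const.sub
      (hsm.comp (contDiff_id.div_const R))))
  · intro r hr
    have : S (r / R) = 0 :=
      Real.smoothTransition.zero_of_nonpos (div_nonpos_of_nonpos_of_nonneg hr hR0.le)
    simp [this]
  · intro r hr
    have : S (r / R) = 1 := Real.smoothTransition.one_of_one_le ((one_le_div hR0).2 hr)
    simp [this]
  · intro r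
    rw [D1]
    rcases lt_or_ge r 0 with hr | hr
    · simp only [n1 _ (div_neg_of_neg_of_pos hr hR0), mul_zero, sub_zero]
      exact Real.exp_pos r
    · have e : 1 ≤ Real.exp r := Real.one_le_exp hr
      have k1 : τ / R * deriv S (r / R) ≤ τ / R * C₁ :=
        mul_le_mul_of_nonneg_left (b1 _) (by positivity)
      have k2 : τ / R * C₁ < 1 := by
        rw [div_mul_eq_mul_div, div_lt_one hR0]; linarith
      simp only
      linarith
  · intro r
    rw [D1, D2]
    rcases lt_or_ge r 0 with hr | hr
    · simp only [n2 _ (div_neg_of_neg_of_pos hr hR0), mul_zero, sub_zero]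
      exact Real.exp_pos r
    · have e : 1 ≤ Real.exp r := Real.one_le_exp hr
      have k1 : τ / R ^ 2 * deriv (deriv S) (r / R) ≤ τ / R ^ 2 * C₂ :=
        mul_le_mul_of_nonneg_left (b2 _) (by positivity)
      have k2 : τ / R ^ 2 * C₂ < 1 := by
        rw [div_mul_eq_mul_div, div_lt_one (by positivity)]; nlinarith
      simp only
      linarith
end

section
/- Let c₀, c₁, c₂, c₃, d₁, d₂, γ, s, Q, Q′, h be real numbers satisfying: c₀² + c₁² + c₂² + c₃² = 1, d₁² + d₂² = 1, c₁·d₁ + c₂·d₂ = 0, 0 < s ≤ 2, 1/2 ≤ Q ≤ 1, Q′ ≥ 0, |γ| ≤ 1/2, and h > 0. Define K₂₁ = s²/16 − Q, K₃₁ = s²/16 − Q, K₀₁ = −1, K₀₂ = −(Q′ + Q²), K₃₂ = −1/(4h²) − 3γ²/h² − 3γ²s²/4 − Q², and Rt = −γ·s·(1 − Q). Then (d₁c₂ − d₂c₁)²·K₂₁ + d₁²c₃²·K₃₁ + d₁²c₀²·K₀₁ + d₂²c₀²·K₀₂ + d₂²c₃²·K₃₂ + 3·d₁·d₂·c₀·c₃·Rt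 < 0. -/
/-!
The sum is in fact at most `-1/4`. The bounds on `s` and `Q` make each diagonal coefficient at most
`-1/4`, and after this is split off there remain `-3/4 (d₁ c₀)²` and `-3/4 (γ s d₂ c₃)²`, which
absorb the mixed term since `3 (1 - Q) ≤ 3/2`. By orthonormality the squares multiplying
the diagonal coefficients add up to one.
-/

/-- The central curvature estimate of Section 6: for orthonormal `C, D` the sectional
curvature sum is strictly negative. -/
theorem stmt_13 (c₀ c₁ c₂ c₃ d₁ d₂ γ s Q Q' h : ℝ)
    (hc : c₀ ^ 2 + c₁ ^ 2 + c₂ ^ 2 + c₃ ^ 2 = 1)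
    (hd : d₁ ^ 2 + d₂ ^ 2 = 1)
    (hcd : c₁ * d₁ + c₂ * d₂ = 0)
    (hs₀ : 0 < s) (hs₂ : s ≤ 2)
    (hQ₁ : 1 / 2 ≤ Q) (hQ₂ : Q ≤ 1) (hQ' : 0 ≤ Q')
    (hγ : |γ| ≤ 1 / 2) (hh : 0 < h) :
    (d₁ * c₂ - d₂ * c₁) ^ 2 * (s ^ 2 / 16 - Q)
      + d₁ ^ 2 * c₃ ^ 2 * (s ^ 2 / 16 - Q)
      + d₁ ^ 2 * c₀ ^ 2 * (-1)
      + d₂ ^ 2 * c₀ ^ 2 * (-(Q' + Q ^ 2))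
      + d₂ ^ 2 * c₃ ^ 2 * (-(1 / (4 * h ^ 2)) - 3 * γ ^ 2 / h ^ 2 - 3 * γ ^ 2 * s ^ 2 / 4 - Q ^ 2)
      + 3 * d₁ * d₂ * c₀ * c₃ * (-(γ * s * (1 - Q))) < 0 := by
  -- Lagrange's identity turns the orthonormality relations into a sum of squares equal to one.
  have hone : (d₁ * c₂ - d₂ * c₁) ^ 2 + d₁ ^ 2 * c₃ ^ 2 + d₁ ^ 2 * c₀ ^ 2
      + d₂ ^ 2 * c₀ ^ 2 + d₂ ^ 2 * c₃ ^ 2 = 1 := by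
    linear_combination (d₁ ^ 2 + d₂ ^ 2) * hc + hd - (c₁ * d₁ + c₂ * d₂) * hcd
  have hK : s ^ 2 / 16 - Q ≤ -(1 / 4) := by nlinarith
  have hQsq : 1 / 4 ≤ Q ^ 2 := by nlinarith
  have hb₁ : (d₁ * c₂ - d₂ * c₁) ^ 2 * (s ^ 2 / 16 - Q)
      ≤ (d₁ * c₂ - d₂ * c₁) ^ 2 * (-(1 / 4)) :=
    mul_le_mul_of_nonneg_left hK (by positivity)
  have hb₂ : d₁ ^ 2 * c₃ ^ 2 * (s ^ 2 / 16 - Q) ≤ d₁ ^ 2 * c₃ ^ 2 * (-(1 / 4)) :=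
    mul_le_mul_of_nonneg_left hK (by positivity)
  have hb₃ : d₂ ^ 2 * c₀ ^ 2 * (-(Q' + Q ^ 2)) ≤ d₂ ^ 2 * c₀ ^ 2 * (-(1 / 4)) :=
    mul_le_mul_of_nonneg_left (by linarith) (by positivity)
  have hb₄ : d₂ ^ 2 * c₃ ^ 2
        * (-(1 / (4 * h ^ 2)) - 3 * γ ^ 2 / h ^ 2 - 3 * γ ^ 2 * s ^ 2 / 4 - Q ^ 2)
      ≤ d₂ ^ 2 * c₃ ^ 2 * (-(1 / 4) - 3 * γ ^ 2 * s ^ 2 / 4) := by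
    have h₁ : 0 ≤ 1 / (4 * h ^ 2) := by positivity
    have h₂ : 0 ≤ 3 * γ ^ 2 / h ^ 2 := by positivity
    exact mul_le_mul_of_nonneg_left (by linarith) (by positivity)
  -- With `x = d₁ c₀` and `z = γ s d₂ c₃`, the form `3/4 x² + 3 (1 - Q) x z + 3/4 z²` is
  -- nonnegative because `0 ≤ 2 (1 - Q) ≤ 1`.
  have hcross : 0 ≤ 3 / 4 * (d₁ * c₀) ^ 2 + 3 * (1 - Q) * (d₁ * c₀) * (γ * s * d₂ * c₃)
      + 3 / 4 * (γ * s * d₂ * c₃) ^ 2 := by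
    generalize d₁ * c₀ = x
    generalize γ * s * d₂ * c₃ = z
    nlinarith [mul_nonneg (sub_nonneg.2 hQ₂) (sq_nonneg (x + z)),
      mul_nonneg (sub_nonneg.2 hQ₁) (sq_nonneg x), mul_nonneg (sub_nonneg.2 hQ₁) (sq_nonneg z)]
  linarith
end
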